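/- The valuation of x_2 is v_2(x_2) = min{−(p^2−p+1)b_1, −p·b_1 − p^2·m} = −(p−1)·b_1 − b_2. -/

import Mathlib

/-!
If `x ^ p - x = a` and `a` has negative valuation, then so does `x`, and the term `x ^ p` dominates:
`p * v x = v a`. Hence `x` has a smaller pole than `a`, so among the terms of `D(x, a)` the one that
is linear in `x` dominates strictly, its coefficient being `-1`: the valuation of `D(x, a)` is
`v x + (p - 1) * v a`. Applying the first observation to `x₂ ^ p - x₂ = a₂ + D(x₁, a₁)` gives `v x₂`
as soon as the two summands on the right have different valuations, and this is forced by
`p ∤ v₀ a₁`.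
-/

/-- A normalized discrete valuation on a field `K`, recorded as a function
`v : K → ℤ`.  The value of `v` at `0` is irrelevant: all conditions below only
refer to nonzero elements (the convention `v 0 = ∞` being understood). -/
structure IsDiscVal {K : Type*} [Field K] (v : K → ℤ) : Prop where
  map_one : v 1 = 0
  map_mul : ∀ x y : K, x ≠ 0 → y ≠ 0 → v (x * y) = v x + v y
  min_le_add : ∀ x y : K, x ≠ 0 → y ≠ 0 → x + y ≠ 0 → min (v x) (v y) ≤ v (x + y)
  exists_uniformizer : ∃ π : K, π ≠ 0 ∧ v π = 1

section Valuation

variable {R Γ₀ : Type*} [CommRing R] [LinearOrderedCommGroupWithZero Γ₀] (v : Valuation R Γ₀)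

lemma one_lt_valuation_of_one_lt_pow_sub_self {n : ℕ} {x : R} (h : 1 < v (x ^ n - x)) :
    1 < v x := by
  contrapose! h
  exact v.map_sub_le (map_pow v x n ▸ pow_le_one' h n) h

lemma valuation_pow_sub_self {n : ℕ} (hn : 1 < n) {x : R} (hx : 1 < v x) :
    v (x ^ n - x) = v x ^ n := by
  have hlt : v x < v (x ^ n) := by
    rw [map_pow]
    exact lt_self_pow₀ hx hn
  rw [v.map_sub_eq_of_lt_left hlt, map_pow]

/-- The polynomial `D(x, y) = (x ^ p + y ^ p - (x + y) ^ p) / p` by which addition of Witt vectors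
of length two differs from componentwise addition. For prime `p` it has integral coefficients and is
written here without the division by `p`; other values of `p` are not meaningful. -/
def wittCarry (p : ℕ) (x y : R) : R :=
  -∑ k ∈ Finset.Ioo 0 p, x ^ k * y ^ (p - k) * (p.choose k / p : ℕ)

lemma wittCarry_eq_div {K : Type*} [Field K] {p : ℕ} (hp : p.Prime) (hpK : (p : K) ≠ 0) (x y : K) :
    wittCarry p x y = (x ^ p + y ^ p - (x + y) ^ p) / p := by
  rw [eq_div_iff hpK, add_pow_prime_eq' hp, wittCarry]
  ring

lemma valuation_natCast_le_one (n : ℕ) : v n ≤ 1 :=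
  natCast_mem v.integer n

lemma valuation_wittCarry {p : ℕ} (hp : 1 < p) {x y : R} (hx : 0 < v x) (hxy : v x < v y) :
    v (wittCarry p x y) = v x * v y ^ (p - 1) := by
  have hy : 0 < v y := hx.trans hxy
  have hlinear : v (x ^ 1 * y ^ (p - 1) * (p.choose 1 / p : ℕ)) = v x * v y ^ (p - 1) := by
    simp [Nat.div_self (zero_lt_one.trans hp)]
  rw [wittCarry, v.map_neg, ← hlinear]
  refine v.map_sum_eq_of_lt (Finset.mem_Ioo.mpr ⟨one_pos, hp⟩) fun k hk ↦ ?_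
  obtain ⟨⟨hk0, hkp⟩, hk1⟩ : (0 < k ∧ k < p) ∧ k ≠ 1 := by simpa using hk
  rw [hlinear]
  calc v (x ^ k * y ^ (p - k) * (p.choose k / p : ℕ))
      ≤ v x ^ k * v y ^ (p - k) := by
        simpa only [map_mul, map_pow] using
          mul_le_of_le_one_right' (valuation_natCast_le_one v (p.choose k / p))
    _ = v x * (v x ^ (k - 1) * v y ^ (p - k)) := by
        rw [← mul_assoc, mul_pow_sub_one hk0.ne']
    _ < v x * (v y ^ (k - 1) * v y ^ (p - k)) := by
        have hk : k - 1 ≠ 0 := by omega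
        have hypk : 0 < v y ^ (p - k) := pow_pos hy _
        gcongr
    _ = v x * v y ^ (p - 1) := by
        rw [← pow_add]
        congr 2
        omega

theorem valuation_pow_eq_max_of_pow_sub_self_eq_add_wittCarry {p : ℕ} (hp : 1 < p) {a c x y : R}
    (ha : 1 < v a) (hx : x ^ p - x = a) (hy : y ^ p - y = c + wittCarry p x a)
    (hc : v c ≠ v x * v a ^ (p - 1)) :
    v y ^ p = max (v c) (v x * v a ^ (p - 1)) := by
  have hx1 : 1 < v x := one_lt_valuation_of_one_lt_pow_sub_self v (hx ▸ ha)
  have hxa : v x < v a := by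
    rw [← hx, valuation_pow_sub_self v hp hx1]
    exact lt_self_pow₀ hx1 hp
  have hcarry := valuation_wittCarry v hp (zero_lt_one.trans hx1) hxa
  have hsum : v (y ^ p - y) = max (v c) (v x * v a ^ (p - 1)) := by
    rw [hy, v.map_add_of_distinct_val (hcarry ▸ hc), hcarry]
  have hy1 : 1 < v y := one_lt_valuation_of_one_lt_pow_sub_self v <| by
    rw [hsum]
    exact lt_max_of_lt_right (one_lt_mul_of_lt_of_le hx1 (one_le_pow₀ ha.le))
  rw [← hsum, valuation_pow_sub_self v hp hy1]

end Valuation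

namespace IsDiscVal

open WithZero

variable {K : Type*} [Field K] {v : K → ℤ}

open Classical in
/-- The multiplicative valuation `x ↦ exp (-v x)` attached to a normalized discrete valuation. It
sends `0` to `0`, whatever the value of `v` there. -/
noncomputable def toValuation (hv : IsDiscVal v) : Valuation K ℤᵐ⁰ where
  toFun x := if x = 0 then 0 else exp (-v x)
  map_zero' := if_pos rfl
  map_one' := by simp [hv.map_one]
  map_mul' x y := by
    by_cases hx : x = 0
    · simp [hx]
    by_cases hy : y = 0
    · simp [hy]
    simp [hx, hy, hv.map_mul x y hx hy, mul_comm]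
  map_add_le_max' x y := by
    by_cases hx : x = 0
    · simp [hx]
    by_cases hy : y = 0
    · simp [hy]
    by_cases hxy : x + y = 0
    · simp [hxy]
    simpa only [hx, hy, hxy, if_false, le_max_iff, exp_le_exp, neg_le_neg_iff, min_le_iff] using
      hv.min_le_add x y hx hy hxy

lemma toValuation_apply (hv : IsDiscVal v) {x : K} (hx : x ≠ 0) : hv.toValuation x = exp (-v x) :=
  if_neg hx

lemma one_lt_toValuation_iff (hv : IsDiscVal v) {x : K} (hx : x ≠ 0) :
    1 < hv.toValuation x ↔ v x < 0 := by
  rw [hv.toValuation_apply hx, ← exp_zero, exp_lt_exp, neg_pos]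

protected lemma map_pow (hv : IsDiscVal v) {x : K} (hx : x ≠ 0) (n : ℕ) : v (x ^ n) = n * v x := by
  have h := map_pow hv.toValuation x n
  rw [hv.toValuation_apply hx, hv.toValuation_apply (pow_ne_zero n hx), ← exp_nsmul, exp_inj,
    nsmul_eq_mul] at h
  linarith

lemma ne_zero_and_mul_map_of_pow_sub_self (hv : IsDiscVal v) {n : ℕ} (hn : 1 < n) {a x : K}
    (ha : a ≠ 0) (hneg : v a < 0) (hx : x ^ n - x = a) : x ≠ 0 ∧ n * v x = v a := by
  have hx1 : 1 < hv.toValuation x := one_lt_valuation_of_one_lt_pow_sub_self _ <| by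
    rwa [hx, hv.one_lt_toValuation_iff ha]
  have hx0 : x ≠ 0 := hv.toValuation.pos_iff.mp (zero_lt_one.trans hx1)
  have h := valuation_pow_sub_self hv.toValuation hn hx1
  rw [hx, ← map_pow, hv.toValuation_apply ha, hv.toValuation_apply (pow_ne_zero n hx0),
    exp_inj, neg_inj, hv.map_pow hx0] at h
  exact ⟨hx0, h.symm⟩

lemma ne_zero_and_mul_map_of_pow_sub_self_eq_add_wittCarry (hv : IsDiscVal v) {p : ℕ} (hp : 1 < p)
    {a c x y : K} (ha : a ≠ 0) (hneg : v a < 0) (hc : c ≠ 0) (hx : x ^ p - x = a)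
    (hy : y ^ p - y = c + wittCarry p x a) (hne : v c ≠ v x + (p - 1) * v a) :
    y ≠ 0 ∧ p * v y = min (v c) (v x + (p - 1) * v a) := by
  have hx0 := (hv.ne_zero_and_mul_map_of_pow_sub_self hp ha hneg hx).1
  have hcarry : hv.toValuation x * hv.toValuation a ^ (p - 1) =
      exp (-(v x + (p - 1) * v a)) := by
    rw [hv.toValuation_apply hx0, hv.toValuation_apply ha, ← exp_nsmul, ← exp_add, nsmul_eq_mul,
      Nat.cast_pred (zero_lt_one.trans hp)]
    congr 1
    ring
  have hmax := valuation_pow_eq_max_of_pow_sub_self_eq_add_wittCarry hv.toValuation hp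
    ((hv.one_lt_toValuation_iff ha).mpr hneg) hx hy
    (by rwa [hcarry, hv.toValuation_apply hc, exp_inj.ne, neg_inj.ne])
  have exp_mono : Monotone (exp : ℤ → ℤᵐ⁰) := fun _ _ ↦ exp_le_exp.mpr
  rw [hcarry, hv.toValuation_apply hc, ← exp_mono.map_max, max_neg_neg] at hmax
  have hy0 : y ≠ 0 := by
    rintro rfl
    rw [map_zero, zero_pow (zero_lt_one.trans hp).ne'] at hmax
    exact exp_ne_zero hmax.symm
  rw [← map_pow, hv.toValuation_apply (pow_ne_zero p hy0), exp_inj, neg_inj,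
    hv.map_pow hy0] at hmax
  exact ⟨hy0, hmax⟩

end IsDiscVal

theorem statement4_general {p : ℕ} (hp : p.Prime) {K0 K2 : Type*} [Field K0] [Field K2]
    [Algebra K0 K2] (hpK2 : (p : K2) ≠ 0) {v0 : K0 → ℤ} {v2 : K2 → ℤ} (hv2 : IsDiscVal v2)
    (hram : ∀ x : K0, x ≠ 0 → v2 (algebraMap K0 K2 x) = (p : ℤ) ^ 2 * v0 x)
    {a1 a2 : K0} (ha1 : a1 ≠ 0) (ha2 : a2 ≠ 0) (hnd : ¬ (p : ℤ) ∣ v0 a1) (hneg : v0 a1 < 0)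
    {x1 x2 : K2} (hx1 : x1 ^ p - x1 = algebraMap K0 K2 a1)
    (hx2 : x2 ^ p - x2 = algebraMap K0 K2 a2 +
      (x1 ^ p + algebraMap K0 K2 a1 ^ p - (x1 + algebraMap K0 K2 a1) ^ p) / (p : K2)) :
    x2 ≠ 0 ∧ v2 x2 = min (((p : ℤ) ^ 2 - p + 1) * v0 a1) (p * v0 a2) := by
  have hp0 : (0 : ℤ) < p := mod_cast hp.pos
  have hA1 : algebraMap K0 K2 a1 ≠ 0 := by simpa using ha1
  have hA2 : algebraMap K0 K2 a2 ≠ 0 := by simpa using ha2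
  have hvA1 : v2 (algebraMap K0 K2 a1) < 0 := by
    rw [hram a1 ha1]
    exact mul_neg_of_pos_of_neg (by positivity) hneg
  have hvx1 : v2 x1 = p * v0 a1 := by
    have h := (hv2.ne_zero_and_mul_map_of_pow_sub_self hp.one_lt hA1 hvA1 hx1).2
    rw [hram a1 ha1, pow_two, mul_assoc] at h
    exact mul_left_cancel₀ hp0.ne' h
  have hcarry : v2 x1 + (p - 1) * v2 (algebraMap K0 K2 a1) =
      p * (((p : ℤ) ^ 2 - p + 1) * v0 a1) := by
    rw [hvx1, hram a1 ha1]
    ring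
  have hvA2 : v2 (algebraMap K0 K2 a2) = p * (p * v0 a2) := by
    rw [hram a2 ha2]
    ring
  have hne : p * v0 a2 ≠ ((p : ℤ) ^ 2 - p + 1) * v0 a1 := fun h ↦
    hnd ⟨v0 a2 - (p - 1) * v0 a1, by linear_combination -h⟩
  rw [← wittCarry_eq_div hp hpK2] at hx2
  obtain ⟨hx2ne, hmin⟩ := hv2.ne_zero_and_mul_map_of_pow_sub_self_eq_add_wittCarry hp.one_lt
    hA1 hvA1 hA2 hx1 hx2 (by rwa [hcarry, hvA2, (mul_right_injective₀ hp0.ne').ne_iff])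
  rw [hcarry, hvA2, ← mul_min_of_nonneg _ _ hp0.le, min_comm] at hmin
  exact ⟨hx2ne, mul_left_cancel₀ hp0.ne' hmin⟩

/-- `v₂(x₂) = min{−(p²−p+1)b₁, −p·b₁−p²·m} = −(p−1)·b₁ − b₂`. -/
theorem statement4
    (p : ℕ) (hp : p.Prime)
    (K0 K2 : Type*) [Field K0] [Field K2] [CharZero K0] [CharZero K2]
    [Algebra K0 K2] [IsGalois K0 K2] [FiniteDimensional K0 K2]
    (hdeg : Module.finrank K0 K2 = p ^ 2)
    (hcyc : IsCyclic (K2 ≃ₐ[K0] K2))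
    (v0 : K0 → ℤ) (v2 : K2 → ℤ)
    (hv0 : IsDiscVal v0) (hv2 : IsDiscVal v2)
    (e0 : ℤ) (he0 : e0 = v0 (p : K0)) (he0pos : 1 ≤ e0)
    (hram : ∀ x : K0, x ≠ 0 → v2 (algebraMap K0 K2 x) = (p : ℤ) ^ 2 * v0 x)
    (a1 μ a2 : K0) (ha1 : a1 ≠ 0) (hμ0 : μ ≠ 0)
    (hwitt : ∀ y : K0, y ^ p - y ≠ a1)
    (hnd : ¬ ((p : ℤ) ∣ v0 a1))
    (hneg : v0 a1 < 0)
    (hbd : -((p : ℤ) * e0) < ((p : ℤ) ^ 2 - 1) * v0 a1)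
    (m : ℤ) (hm : m = -v0 μ) (hmpos : 0 < m)
    (hmu1 : (p : ℤ) ^ 2 * (p - 1) * m - (2 * p * (p - 1) + 1) * v0 a1 < (p : ℤ) ^ 2 * e0)
    (hmu2 : -(((p : ℤ) ^ 2 - 1) * v0 a1) < (p : ℤ) ^ 2 * m)
    (ha2 : a2 = μ ^ p * a1)
    (x1 x2 : K2)
    (hx1 : x1 ^ p - x1 = algebraMap K0 K2 a1)
    (hx2 : x2 ^ p - x2 = algebraMap K0 K2 a2 +
      (x1 ^ p + (algebraMap K0 K2 a1) ^ p - (x1 + algebraMap K0 K2 a1) ^ p) / (p : K2))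
    (hgen : Algebra.adjoin K0 {x1, x2} = ⊤)
    (b1 b2 : ℤ) (hb1 : b1 = -v0 a1) (hb2 : b2 = (p : ℤ) ^ 2 * m + b1) :
    x2 ≠ 0 ∧
    v2 x2 = min (-(((p : ℤ) ^ 2 - p + 1) * b1)) (-((p : ℤ) * b1) - (p : ℤ) ^ 2 * m) ∧
    min (-(((p : ℤ) ^ 2 - p + 1) * b1)) (-((p : ℤ) * b1) - (p : ℤ) ^ 2 * m) =
      -(((p : ℤ) - 1) * b1) - b2 := by
  subst hm hb1 hb2 ha2
  have hva2 : v0 (μ ^ p * a1) = p * v0 μ + v0 a1 := by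
    rw [hv0.map_mul _ _ (pow_ne_zero p hμ0) ha1, hv0.map_pow hμ0]
  obtain ⟨hx2ne, hvx2⟩ := statement4_general hp (Nat.cast_ne_zero.mpr hp.ne_zero) hv2 hram ha1
    (mul_ne_zero (pow_ne_zero p hμ0) ha1) hnd hneg hx1 hx2
  have hle : ((p : ℤ) - 1) ^ 2 * -v0 a1 ≤ (p : ℤ) ^ 2 * -v0 μ := by nlinarith [hp.one_lt]
  refine ⟨hx2ne, ?_, ?_⟩
  · rw [hvx2, hva2]
    congr 1 <;> ring
  · rw [min_eq_right (by linarith)]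
    ring
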